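/- arXiv:2205.03723 — 2 statements merged into one kernel-verified Lean document; each statement's English description precedes it below -/
import Mathlib

section
/- If (l, r, β, V) is a bimodule of a Hom-Novikov color Hom-algebra (A, ·, ε, α), then A ⊕ V with product (x₁+v₁)∗(x₂+v₂) = x₁·x₂ + l(x₁)v₂ + r(x₂)v₁ and twisting map α⊕β is a Hom-Novikov color Hom-algebra. -/
open scoped TensorProduct

section ColorHomDefs

variable {K Γ A V : Type*} [Field K] [AddCommGroup Γ]
variable [AddCommGroup A] [Module K A] [AddCommGroup V] [Module K V]

/-- A commutation factor (skew-symmetric bicharacter) on `Γ` with values in `K`. -/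
def IsCommFactor (ε : Γ → Γ → K) : Prop :=
  (∀ a b, ε a b ≠ 0) ∧ (∀ a b, ε a b * ε b a = 1) ∧
    (∀ a b c, ε a (b + c) = ε a b * ε a c) ∧
    (∀ a b c, ε (a + b) c = ε a c * ε b c)

/-- The (even bilinear) product respects the grading. -/
def GradedMul (𝒜 : Γ → Submodule K A) (μ : A →ₗ[K] A →ₗ[K] A) : Prop :=
  ∀ ⦃γ₁ γ₂ : Γ⦄ ⦃x y : A⦄, x ∈ 𝒜 γ₁ → y ∈ 𝒜 γ₂ → μ x y ∈ 𝒜 (γ₁ + γ₂)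

/-- An even linear map. -/
def GradedEnd (𝒜 : Γ → Submodule K A) (f : A →ₗ[K] A) : Prop :=
  ∀ ⦃γ : Γ⦄ ⦃x : A⦄, x ∈ 𝒜 γ → f x ∈ 𝒜 γ

/-- ε-commutativity on homogeneous elements. -/
def IsEpsComm (𝒜 : Γ → Submodule K A) (ε : Γ → Γ → K) (μ : A →ₗ[K] A →ₗ[K] A) : Prop :=
  ∀ ⦃γ₁ γ₂ : Γ⦄ ⦃x y : A⦄, x ∈ 𝒜 γ₁ → y ∈ 𝒜 γ₂ → μ x y = ε γ₁ γ₂ • μ y x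

/-- Hom-associativity on homogeneous elements. -/
def IsHomAssoc (𝒜 : Γ → Submodule K A) (μ : A →ₗ[K] A →ₗ[K] A) (α : A →ₗ[K] A) : Prop :=
  ∀ ⦃γ₁ γ₂ γ₃ : Γ⦄ ⦃x y z : A⦄, x ∈ 𝒜 γ₁ → y ∈ 𝒜 γ₂ → z ∈ 𝒜 γ₃ →
    μ (μ x y) (α z) = μ (α x) (μ y z)

/-- The two defining identities of a Hom-Novikov color Hom-algebra. -/
def IsHomNovikov (𝒜 : Γ → Submodule K A) (ε : Γ → Γ → K) (μ : A →ₗ[K] A →ₗ[K] A)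
    (α : A →ₗ[K] A) : Prop :=
  (∀ ⦃γ₁ γ₂ γ₃ : Γ⦄ ⦃x y z : A⦄, x ∈ 𝒜 γ₁ → y ∈ 𝒜 γ₂ → z ∈ 𝒜 γ₃ →
      μ (μ x y) (α z) - μ (α x) (μ y z)
        = ε γ₁ γ₂ • (μ (μ y x) (α z) - μ (α y) (μ x z))) ∧
  (∀ ⦃γ₁ γ₂ γ₃ : Γ⦄ ⦃x y z : A⦄, x ∈ 𝒜 γ₁ → y ∈ 𝒜 γ₂ → z ∈ 𝒜 γ₃ →
      μ (μ x y) (α z) = ε γ₂ γ₃ • μ (μ x z) (α y))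

/-- ε-skew-symmetry and the ε-Hom-Jacobi identity for a bilinear bracket. -/
def IsHomLie (𝒜 : Γ → Submodule K A) (ε : Γ → Γ → K) (br : A →ₗ[K] A →ₗ[K] A)
    (α : A →ₗ[K] A) : Prop :=
  (∀ ⦃γ₁ γ₂ : Γ⦄ ⦃x y : A⦄, x ∈ 𝒜 γ₁ → y ∈ 𝒜 γ₂ → br x y = -(ε γ₁ γ₂ • br y x)) ∧
  (∀ ⦃γ₁ γ₂ γ₃ : Γ⦄ ⦃x y z : A⦄, x ∈ 𝒜 γ₁ → y ∈ 𝒜 γ₂ → z ∈ 𝒜 γ₃ →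
      ε γ₃ γ₁ • br (α x) (br y z) + ε γ₁ γ₂ • br (α y) (br z x)
        + ε γ₂ γ₃ • br (α z) (br x y) = 0)

/-- Compatibility conditions of a Hom-Novikov-Poisson color Hom-algebra. -/
def HNPCompat (𝒜 : Γ → Submodule K A) (ε : Γ → Γ → K) (μ d : A →ₗ[K] A →ₗ[K] A)
    (α : A →ₗ[K] A) : Prop :=
  (∀ ⦃γ₁ γ₂ γ₃ : Γ⦄ ⦃x y z : A⦄, x ∈ 𝒜 γ₁ → y ∈ 𝒜 γ₂ → z ∈ 𝒜 γ₃ →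
      d (μ x y) (α z) = ε γ₂ γ₃ • μ (d x z) (α y)) ∧
  (∀ ⦃γ₁ γ₂ γ₃ : Γ⦄ ⦃x y z : A⦄, x ∈ 𝒜 γ₁ → y ∈ 𝒜 γ₂ → z ∈ 𝒜 γ₃ →
      μ (d x y) (α z) - d (α x) (μ y z)
        = ε γ₁ γ₂ • (μ (d y x) (α z) - d (α y) (μ x z)))

/-- Hom-Novikov-Poisson color Hom-algebra: `μ` is the ε-commutative Hom-associative
product, `d` the Hom-Novikov product. -/
def IsHNP (𝒜 : Γ → Submodule K A) (ε : Γ → Γ → K) (μ d : A →ₗ[K] A →ₗ[K] A)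
    (α : A →ₗ[K] A) : Prop :=
  GradedMul 𝒜 μ ∧ GradedMul 𝒜 d ∧ GradedEnd 𝒜 α ∧
    IsEpsComm 𝒜 ε μ ∧ IsHomAssoc 𝒜 μ α ∧ IsHomNovikov 𝒜 ε d α ∧ HNPCompat 𝒜 ε μ d α

/-- Admissibility: the left Hom-associator mixing the two products vanishes. -/
def IsAdmissibleHNP (𝒜 : Γ → Submodule K A) (ε : Γ → Γ → K) (μ d : A →ₗ[K] A →ₗ[K] A)
    (α : A →ₗ[K] A) : Prop :=
  IsHNP 𝒜 ε μ d α ∧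
    ∀ ⦃γ₁ γ₂ γ₃ : Γ⦄ ⦃x y z : A⦄, x ∈ 𝒜 γ₁ → y ∈ 𝒜 γ₂ → z ∈ 𝒜 γ₃ →
      d (μ x y) (α z) = d (α x) (μ y z)

/-- Gelfand-Dorfman compatibility for a bilinear bracket. -/
def GDCompat (𝒜 : Γ → Submodule K A) (ε : Γ → Γ → K) (μ br : A →ₗ[K] A →ₗ[K] A)
    (α : A →ₗ[K] A) : Prop :=
  ∀ ⦃γ₁ γ₂ γ₃ : Γ⦄ ⦃x y z : A⦄, x ∈ 𝒜 γ₁ → y ∈ 𝒜 γ₂ → z ∈ 𝒜 γ₃ →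
    μ (α y) (br x z)
      = ε γ₂ γ₁ • br (α x) (μ y z) - ε (γ₁ + γ₂) γ₃ • br (α z) (μ y x)
        + μ (br y x) (α z) - ε γ₁ γ₃ • μ (br y z) (α x)

/-- The transposed Hom-ε-Leibniz identity. -/
def TransposedLeibniz (𝒜 : Γ → Submodule K A) (ε : Γ → Γ → K) (μ br : A →ₗ[K] A →ₗ[K] A)
    (α : A →ₗ[K] A) : Prop :=
  ∀ ⦃γ₁ γ₂ γ₃ : Γ⦄ ⦃x y z : A⦄, x ∈ 𝒜 γ₁ → y ∈ 𝒜 γ₂ → z ∈ 𝒜 γ₃ →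
    (2 : K) • μ (α z) (br x y) = br (μ z x) (α y) + ε γ₃ γ₁ • br (α x) (μ z y)

/-- The ε-commutator bracket of homogeneous elements of degrees `γ`, `δ`. -/
def brkt (ε : Γ → Γ → K) (μ : A →ₗ[K] A →ₗ[K] A) (γ δ : Γ) (x y : A) : A :=
  μ x y - ε γ δ • μ y x

/-- The Yau twist `x ∗ y = α (μ x y)` of a bilinear product. -/
def twistMul (α : A →ₗ[K] A) (μ : A →ₗ[K] A →ₗ[K] A) : A →ₗ[K] A →ₗ[K] A :=
  (LinearMap.llcomp K A A A α).comp μ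

/-- The product `x ⋄ y = μ x (D y)`. -/
def precompMul (D : A →ₗ[K] A) (μ : A →ₗ[K] A →ₗ[K] A) : A →ₗ[K] A →ₗ[K] A :=
  (LinearMap.lcomp K A D).comp μ

/-- Semidirect product of an ε-commutative Hom-associative color Hom-algebra with a
bimodule, on homogeneous elements of degrees `γ₁`, `γ₂`. -/
def sdDot (ε : Γ → Γ → K) (μ : A →ₗ[K] A →ₗ[K] A) (s : A →ₗ[K] V →ₗ[K] V)
    (γ₁ γ₂ : Γ) (X Y : A × V) : A × V :=
  (μ X.1 Y.1, s X.1 Y.2 + ε γ₁ γ₂ • s Y.1 X.2)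

/-- Semidirect product of a Hom-Novikov color Hom-algebra with a bimodule. -/
def sdDiam (μ : A →ₗ[K] A →ₗ[K] A) (l r : A →ₗ[K] V →ₗ[K] V) (X Y : A × V) : A × V :=
  (μ X.1 Y.1, l X.1 Y.2 + r Y.1 X.2)

/-- Semidirect product bracket of a Hom-Lie color Hom-algebra with a representation. -/
def sdBr (ε : Γ → Γ → K) (br : A →ₗ[K] A →ₗ[K] A) (ρ : A →ₗ[K] V →ₗ[K] V)
    (γ₁ γ₂ : Γ) (X Y : A × V) : A × V :=
  (br X.1 Y.1, ρ X.1 Y.2 - ε γ₁ γ₂ • ρ Y.1 X.2)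

/-- The twisting map `α ⊕ β` on `A × V`. -/
def sdEnd (α : A →ₗ[K] A) (β : V →ₗ[K] V) (X : A × V) : A × V := (α X.1, β X.2)

end ColorHomDefs

/-!
The Hom-associator of `A ⊕ V` has the Hom-associator of `A` as its `A`-component, and its
`V`-component is a sum of three mixed Hom-associators, one for each position of the argument
taken from `V`. Exchanging the first two arguments fixes a module element in third place (`hb1`)
and interchanges the other two positions (`hb2`, `hb3`). For right commutativity, exchanging the
last two arguments fixes a module element in first place (`hb6`) and interchanges the other two
positions (`hb4`, `hb5`).
-/

section SemidirectMul

variable {K Γ A V : Type*} [CommRing K]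
variable [AddCommGroup A] [Module K A] [AddCommGroup V] [Module K V]

/-- The Hom-associator `(x · y) · α(z) - α(x) · (y · z)`. -/
def homAssociator (μ : A →ₗ[K] A →ₗ[K] A) (α : A →ₗ[K] A) (x y z : A) : A :=
  μ (μ x y) (α z) - μ (α x) (μ y z)

/-- The product of the semidirect product `A ⊕ V` as a bilinear map, so that `GradedMul` and
`IsHomNovikov` apply to it; its values are those of `sdDiam`. -/
def semidirectMul (μ : A →ₗ[K] A →ₗ[K] A) (l r : A →ₗ[K] V →ₗ[K] V) :
    A × V →ₗ[K] A × V →ₗ[K] A × V :=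
  LinearMap.mk₂ K (fun X Y ↦ (μ X.1 Y.1, l X.1 Y.2 + r Y.1 X.2))
    (fun X X' Y ↦ by ext <;> simp [add_add_add_comm])
    (fun c X Y ↦ by ext <;> simp)
    (fun X Y Y' ↦ by ext <;> simp [add_add_add_comm])
    (fun c X Y ↦ by ext <;> simp)

/-- An even bilinear action of the graded space `A` on the graded space `V`. -/
def GradedAction [Add Γ] (𝒜 : Γ → Submodule K A) (𝒱 : Γ → Submodule K V)
    (ρ : A →ₗ[K] V →ₗ[K] V) : Prop :=
  ∀ ⦃γ₁ γ₂ : Γ⦄ ⦃x : A⦄ ⦃v : V⦄, x ∈ 𝒜 γ₁ → v ∈ 𝒱 γ₂ → ρ x v ∈ 𝒱 (γ₁ + γ₂)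

/-- The six identities of a bimodule `(l, r, β, V)` over a Hom-Novikov color Hom-algebra, in the
order `hb1`, …, `hb6`. Evenness of `l` and `r` is stated separately, as `GradedAction`. -/
structure IsHomNovikovBimodule (𝒜 : Γ → Submodule K A) (𝒱 : Γ → Submodule K V)
    (ε : Γ → Γ → K) (μ : A →ₗ[K] A →ₗ[K] A) (α : A →ₗ[K] A) (β : V →ₗ[K] V)
    (l r : A →ₗ[K] V →ₗ[K] V) : Prop where
  left_symm : ∀ ⦃γ₁ γ₂ γ₃ : Γ⦄ ⦃x y : A⦄ ⦃v : V⦄, x ∈ 𝒜 γ₁ → y ∈ 𝒜 γ₂ → v ∈ 𝒱 γ₃ →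
    l (μ x y) (β v) - l (α x) (l y v) = ε γ₁ γ₂ • (l (μ y x) (β v) - l (α y) (l x v))
  middle_eq_right : ∀ ⦃γ₁ γ₂ γ₃ : Γ⦄ ⦃x y : A⦄ ⦃v : V⦄, x ∈ 𝒜 γ₁ → y ∈ 𝒜 γ₂ → v ∈ 𝒱 γ₃ →
    r (α y) (l x v) - l (α x) (r y v) = ε γ₁ γ₃ • (r (α y) (r x v) - r (μ x y) (β v))
  right_eq_middle : ∀ ⦃γ₁ γ₂ γ₃ : Γ⦄ ⦃x y : A⦄ ⦃v : V⦄, x ∈ 𝒜 γ₁ → y ∈ 𝒜 γ₂ → v ∈ 𝒱 γ₃ →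
    r (α y) (r x v) - r (μ x y) (β v) = ε γ₃ γ₁ • (r (α y) (l x v) - l (α x) (r y v))
  left_mul : ∀ ⦃γ₁ γ₂ γ₃ : Γ⦄ ⦃x y : A⦄ ⦃v : V⦄, x ∈ 𝒜 γ₁ → y ∈ 𝒜 γ₂ → v ∈ 𝒱 γ₃ →
    l (μ x y) (β v) = ε γ₂ γ₃ • r (α y) (l x v)
  right_left : ∀ ⦃γ₁ γ₂ γ₃ : Γ⦄ ⦃x y : A⦄ ⦃v : V⦄, x ∈ 𝒜 γ₁ → y ∈ 𝒜 γ₂ → v ∈ 𝒱 γ₃ →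
    r (α y) (l x v) = ε γ₃ γ₂ • l (μ x y) (β v)
  right_right : ∀ ⦃γ₁ γ₂ γ₃ : Γ⦄ ⦃x y : A⦄ ⦃v : V⦄, x ∈ 𝒜 γ₁ → y ∈ 𝒜 γ₂ → v ∈ 𝒱 γ₃ →
    r (α y) (r x v) = ε γ₁ γ₂ • r (α x) (r y v)

variable (μ : A →ₗ[K] A →ₗ[K] A) (α : A →ₗ[K] A) (β : V →ₗ[K] V) (l r : A →ₗ[K] V →ₗ[K] V)

@[simp]
theorem semidirectMul_apply (X Y : A × V) :
    semidirectMul μ l r X Y = (μ X.1 Y.1, l X.1 Y.2 + r Y.1 X.2) :=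
  rfl

theorem semidirectMul_semidirectMul_prodMap (X Y Z : A × V) :
    semidirectMul μ l r (semidirectMul μ l r X Y) (α.prodMap β Z) =
      (μ (μ X.1 Y.1) (α Z.1),
        l (μ X.1 Y.1) (β Z.2) + r (α Z.1) (l X.1 Y.2) + r (α Z.1) (r Y.1 X.2)) := by
  simp [add_assoc]

theorem homAssociator_semidirectMul (X Y Z : A × V) :
    homAssociator (semidirectMul μ l r) (α.prodMap β) X Y Z =
      (homAssociator μ α X.1 Y.1 Z.1,
        (l (μ X.1 Y.1) (β Z.2) - l (α X.1) (l Y.1 Z.2)) +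
          (r (α Z.1) (l X.1 Y.2) - l (α X.1) (r Z.1 Y.2)) +
          (r (α Z.1) (r Y.1 X.2) - r (μ Y.1 Z.1) (β X.2))) := by
  rw [homAssociator, semidirectMul_semidirectMul_prodMap]
  ext
  · rfl
  · simp only [semidirectMul_apply, LinearMap.prodMap_apply, Prod.snd_sub, map_add]
    abel

end SemidirectMul

section GradedSemidirectMul

variable {K Γ A V : Type*} [Field K]
variable [AddCommGroup A] [Module K A] [AddCommGroup V] [Module K V]
variable {𝒜 : Γ → Submodule K A} {𝒱 : Γ → Submodule K V} {ε : Γ → Γ → K}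
variable {μ : A →ₗ[K] A →ₗ[K] A} {α : A →ₗ[K] A} {β : V →ₗ[K] V} {l r : A →ₗ[K] V →ₗ[K] V}

theorem GradedMul.semidirectMul [AddCommGroup Γ] (hμ : GradedMul 𝒜 μ)
    (hl : GradedAction 𝒜 𝒱 l) (hr : GradedAction 𝒜 𝒱 r) :
    GradedMul (fun γ ↦ (𝒜 γ).prod (𝒱 γ)) (semidirectMul μ l r) := by
  rintro γ₁ γ₂ ⟨x, u⟩ ⟨y, v⟩ ⟨hx, hu⟩ ⟨hy, hv⟩
  have hru : r y u ∈ 𝒱 (γ₁ + γ₂) := add_comm γ₂ γ₁ ▸ hr hy hu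
  exact ⟨hμ hx hy, add_mem (hl hx hv) hru⟩

namespace IsHomNovikovBimodule

variable {γ₁ γ₂ γ₃ : Γ} {X Y Z : A × V}

theorem homAssociator_semidirectMul_comm (hV : IsHomNovikovBimodule 𝒜 𝒱 ε μ α β l r)
    (hA : IsHomNovikov 𝒜 ε μ α) (hX : X ∈ (𝒜 γ₁).prod (𝒱 γ₁)) (hY : Y ∈ (𝒜 γ₂).prod (𝒱 γ₂))
    (hZ : Z ∈ (𝒜 γ₃).prod (𝒱 γ₃)) :
    homAssociator (semidirectMul μ l r) (α.prodMap β) X Y Z =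
      ε γ₁ γ₂ • homAssociator (semidirectMul μ l r) (α.prodMap β) Y X Z := by
  simp only [homAssociator_semidirectMul, Prod.smul_mk]
  refine Prod.ext (hA.1 hX.1 hY.1 hZ.1) ?_
  simp only [smul_add]
  rw [hV.left_symm hX.1 hY.1 hZ.2, hV.middle_eq_right hX.1 hZ.1 hY.2,
    hV.right_eq_middle hY.1 hZ.1 hX.2, add_right_comm]

theorem semidirectMul_right_comm (hV : IsHomNovikovBimodule 𝒜 𝒱 ε μ α β l r)
    (hA : IsHomNovikov 𝒜 ε μ α) (hX : X ∈ (𝒜 γ₁).prod (𝒱 γ₁)) (hY : Y ∈ (𝒜 γ₂).prod (𝒱 γ₂))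
    (hZ : Z ∈ (𝒜 γ₃).prod (𝒱 γ₃)) :
    semidirectMul μ l r (semidirectMul μ l r X Y) (α.prodMap β Z) =
      ε γ₂ γ₃ • semidirectMul μ l r (semidirectMul μ l r X Z) (α.prodMap β Y) := by
  simp only [semidirectMul_semidirectMul_prodMap, Prod.smul_mk]
  refine Prod.ext (hA.2 hX.1 hY.1 hZ.1) ?_
  simp only [smul_add]
  rw [hV.left_mul hX.1 hY.1 hZ.2, hV.right_left hX.1 hZ.1 hY.2,
    hV.right_right hY.1 hZ.1 hX.2, add_comm (ε γ₂ γ₃ • r (α Y.1) (l X.1 Z.2))]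

theorem isHomNovikov_semidirectMul (hV : IsHomNovikovBimodule 𝒜 𝒱 ε μ α β l r)
    (hA : IsHomNovikov 𝒜 ε μ α) :
    IsHomNovikov (fun γ ↦ (𝒜 γ).prod (𝒱 γ)) ε (semidirectMul μ l r) (α.prodMap β) :=
  ⟨fun _ _ _ _ _ _ ↦ hV.homAssociator_semidirectMul_comm hA,
    fun _ _ _ _ _ _ ↦ hV.semidirectMul_right_comm hA⟩

end IsHomNovikovBimodule

end GradedSemidirectMul

/-- semidirect product of a Hom-Novikov color Hom-algebra with a
bimodule `(l, r, β, V)`. -/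
theorem semidirect_homNovikov
    {K Γ A V : Type*} [Field K] [AddCommGroup Γ] [AddCommGroup A] [Module K A]
    [AddCommGroup V] [Module K V]
    (𝒜 : Γ → Submodule K A) (𝒱 : Γ → Submodule K V) (ε : Γ → Γ → K)
    (μ : A →ₗ[K] A →ₗ[K] A) (α : A →ₗ[K] A) (β : V →ₗ[K] V)
    (l r : A →ₗ[K] V →ₗ[K] V)
    (hε : IsCommFactor ε) (hμ : GradedMul 𝒜 μ) (hα : GradedEnd 𝒜 α)
    (hβ : ∀ ⦃γ : Γ⦄ ⦃v : V⦄, v ∈ 𝒱 γ → β v ∈ 𝒱 γ)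
    (hl : ∀ ⦃γ₁ γ₂ : Γ⦄ ⦃x : A⦄ ⦃v : V⦄, x ∈ 𝒜 γ₁ → v ∈ 𝒱 γ₂ → l x v ∈ 𝒱 (γ₁ + γ₂))
    (hr : ∀ ⦃γ₁ γ₂ : Γ⦄ ⦃x : A⦄ ⦃v : V⦄, x ∈ 𝒜 γ₁ → v ∈ 𝒱 γ₂ → r x v ∈ 𝒱 (γ₁ + γ₂))
    (hNov : IsHomNovikov 𝒜 ε μ α)
    (hb1 : ∀ ⦃γ₁ γ₂ γ₃ : Γ⦄ ⦃x y : A⦄ ⦃v : V⦄, x ∈ 𝒜 γ₁ → y ∈ 𝒜 γ₂ → v ∈ 𝒱 γ₃ →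
      l (μ x y) (β v) - l (α x) (l y v) = ε γ₁ γ₂ • (l (μ y x) (β v) - l (α y) (l x v)))
    (hb2 : ∀ ⦃γ₁ γ₂ γ₃ : Γ⦄ ⦃x y : A⦄ ⦃v : V⦄, x ∈ 𝒜 γ₁ → y ∈ 𝒜 γ₂ → v ∈ 𝒱 γ₃ →
      r (α y) (l x v) - l (α x) (r y v) = ε γ₁ γ₃ • (r (α y) (r x v) - r (μ x y) (β v)))
    (hb3 : ∀ ⦃γ₁ γ₂ γ₃ : Γ⦄ ⦃x y : A⦄ ⦃v : V⦄, x ∈ 𝒜 γ₁ → y ∈ 𝒜 γ₂ → v ∈ 𝒱 γ₃ →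
      r (α y) (r x v) - r (μ x y) (β v) = ε γ₃ γ₁ • (r (α y) (l x v) - l (α x) (r y v)))
    (hb4 : ∀ ⦃γ₁ γ₂ γ₃ : Γ⦄ ⦃x y : A⦄ ⦃v : V⦄, x ∈ 𝒜 γ₁ → y ∈ 𝒜 γ₂ → v ∈ 𝒱 γ₃ →
      l (μ x y) (β v) = ε γ₂ γ₃ • r (α y) (l x v))
    (hb5 : ∀ ⦃γ₁ γ₂ γ₃ : Γ⦄ ⦃x y : A⦄ ⦃v : V⦄, x ∈ 𝒜 γ₁ → y ∈ 𝒜 γ₂ → v ∈ 𝒱 γ₃ →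
      r (α y) (l x v) = ε γ₃ γ₂ • l (μ x y) (β v))
    (hb6 : ∀ ⦃γ₁ γ₂ γ₃ : Γ⦄ ⦃x y : A⦄ ⦃v : V⦄, x ∈ 𝒜 γ₁ → y ∈ 𝒜 γ₂ → v ∈ 𝒱 γ₃ →
      r (α y) (r x v) = ε γ₁ γ₂ • r (α x) (r y v)) :
    (∀ ⦃γ₁ γ₂ : Γ⦄ ⦃X Y : A × V⦄, X ∈ (𝒜 γ₁).prod (𝒱 γ₁) → Y ∈ (𝒜 γ₂).prod (𝒱 γ₂) →
        sdDiam μ l r X Y ∈ (𝒜 (γ₁ + γ₂)).prod (𝒱 (γ₁ + γ₂))) ∧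
    (∀ ⦃γ₁ γ₂ γ₃ : Γ⦄ ⦃X Y Z : A × V⦄, X ∈ (𝒜 γ₁).prod (𝒱 γ₁) →
        Y ∈ (𝒜 γ₂).prod (𝒱 γ₂) → Z ∈ (𝒜 γ₃).prod (𝒱 γ₃) →
        sdDiam μ l r (sdDiam μ l r X Y) (sdEnd α β Z)
            - sdDiam μ l r (sdEnd α β X) (sdDiam μ l r Y Z)
          = ε γ₁ γ₂ • (sdDiam μ l r (sdDiam μ l r Y X) (sdEnd α β Z)
            - sdDiam μ l r (sdEnd α β Y) (sdDiam μ l r X Z))) ∧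
    (∀ ⦃γ₁ γ₂ γ₃ : Γ⦄ ⦃X Y Z : A × V⦄, X ∈ (𝒜 γ₁).prod (𝒱 γ₁) →
        Y ∈ (𝒜 γ₂).prod (𝒱 γ₂) → Z ∈ (𝒜 γ₃).prod (𝒱 γ₃) →
        sdDiam μ l r (sdDiam μ l r X Y) (sdEnd α β Z)
          = ε γ₂ γ₃ • sdDiam μ l r (sdDiam μ l r X Z) (sdEnd α β Y)) := by
  have hV : IsHomNovikovBimodule 𝒜 𝒱 ε μ α β l r := ⟨hb1, hb2, hb3, hb4, hb5, hb6⟩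
  have hAV := hV.isHomNovikov_semidirectMul hNov
  exact ⟨hμ.semidirectMul hl hr, hAV.1, hAV.2⟩
end

section
/- In any multiplicative transposed Hom-Poisson color Hom-algebra, for all homogeneous h,x,y,z, the cyclic sum over (x,y,z) of ε(z,x)[α(h)·[x,y], α²(z)] equals 0. -/
open scoped TensorProduct

/-!
Write `R` for the cyclic sum of `ε(z,x)[α(h·x), [α(y), α(z)]]` and `S` for the sum in question.
By skew-symmetry the transposed Leibniz rule reads
`2α(h)·[x,y] = [h·x, α(y)] - ε(x,y)[h·y, α(x)]`. Bracketing it with `α²(z)` and regrouping by the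
Jacobi identity gives `2S = R`. Multiplying the Jacobi identity for `x, y, z` by `2α²(h)` and
expanding by the same rule gives `0 = S - R`. Hence `S = 2S - R = 0`, in every characteristic.
-/

/-- The cyclic sum of `ε(z,x) f(x,y,z)` over `(x,y,z)`, for `x`, `y`, `z` of degrees `a`, `b`, `c`:
the common shape of the Hom-Jacobi identity and of the sums `S` and `R`. The degrees are
passed explicitly because they are not determined by the elements. -/
def colorCyclicSum {K Γ A : Type*} [SMul K A] [Add A] (ε : Γ → Γ → K) (a b c : Γ)
    (f : A → A → A → A) (x y z : A) : A :=
  ε c a • f x y z + ε a b • f y z x + ε b c • f z x y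

section TransposedHomPoisson

variable {K Γ A : Type*} [Field K] [AddCommGroup Γ] [AddCommGroup A] [Module K A]
variable {𝒜 : Γ → Submodule K A} {ε : Γ → Γ → K} {μ br : A →ₗ[K] A →ₗ[K] A} {α : A →ₗ[K] A}
variable {a b c d : Γ} {h x y z : A}

theorem IsCommFactor.mul_swap (hε : IsCommFactor ε) (a b : Γ) : ε a b * ε b a = 1 :=
  hε.2.1 a b

theorem IsCommFactor.map_add_right (hε : IsCommFactor ε) (a b c : Γ) :
    ε a (b + c) = ε a b * ε a c :=
  hε.2.2.1 a b c

theorem IsCommFactor.map_add_left (hε : IsCommFactor ε) (a b c : Γ) :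
    ε (a + b) c = ε a c * ε b c :=
  hε.2.2.2 a b c

theorem IsCommFactor.mul_map_add_left (hε : IsCommFactor ε) (a b c : Γ) :
    ε c a * ε (a + b) c = ε b c := by
  rw [hε.map_add_left, ← mul_assoc, hε.mul_swap, one_mul]

theorem IsCommFactor.mul_map_add_right (hε : IsCommFactor ε) (a b c : Γ) :
    ε a b * ε b (a + c) = ε b c := by
  rw [hε.map_add_right, ← mul_assoc, hε.mul_swap, one_mul]

theorem IsHomLie.smul_br_br_left (hLie : IsHomLie 𝒜 ε br α) (hε : IsCommFactor ε)
    (hbr : GradedMul 𝒜 br) (hα : GradedEnd 𝒜 α) (hx : x ∈ 𝒜 a) (hy : y ∈ 𝒜 b) (hz : z ∈ 𝒜 c) :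
    ε c a • br (br x y) (α z) = -(ε b c • br (α z) (br x y)) := by
  rw [hLie.1 (hbr hx hy) (hα hz), smul_neg, smul_smul, hε.mul_map_add_left]

theorem IsHomLie.colorCyclicSum_br_br_left (hLie : IsHomLie 𝒜 ε br α) (hε : IsCommFactor ε)
    (hbr : GradedMul 𝒜 br) (hα : GradedEnd 𝒜 α) (hx : x ∈ 𝒜 a) (hy : y ∈ 𝒜 b) (hz : z ∈ 𝒜 c) :
    colorCyclicSum ε a b c (fun x y z ↦ br (br x y) (α z)) x y z = 0 := by
  have jacobi := hLie.2 hx hy hz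
  simp only [colorCyclicSum]
  rw [hLie.smul_br_br_left hε hbr hα hx hy hz, hLie.smul_br_br_left hε hbr hα hy hz hx,
    hLie.smul_br_br_left hε hbr hα hz hx hy]
  linear_combination (norm := module) (-1 : K) • jacobi

theorem IsHomLie.br_apply_br (hLie : IsHomLie 𝒜 ε br α) (hε : IsCommFactor ε)
    (hbr : GradedMul 𝒜 br) (hα : GradedEnd 𝒜 α) (hx : x ∈ 𝒜 a) (hy : y ∈ 𝒜 b) (hz : z ∈ 𝒜 c) :
    br (α x) (br y z) = br (br x y) (α z) - ε b c • br (br x z) (α y) := by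
  have cyclic := hLie.colorCyclicSum_br_br_left hε hbr hα hx hy hz
  have swap_left : br (br y z) (α x) = -(ε (b + c) a • br (α x) (br y z)) :=
    hLie.1 (hbr hy hz) (hα hx)
  have swap_zx : br (br z x) (α y) = -(ε c a • br (br x z) (α y)) := by
    rw [hLie.1 hz hx, map_neg, map_smul, LinearMap.neg_apply, LinearMap.smul_apply]
  simp only [colorCyclicSum, swap_left, swap_zx, smul_neg, smul_smul,
    hε.mul_map_add_left] at cyclic
  have factored : ε c a • (br (α x) (br y z)
      - (br (br x y) (α z) - ε b c • br (br x z) (α y))) = 0 := by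
    linear_combination (norm := module) (-1 : K) • cyclic
  exact sub_eq_zero.mp ((smul_eq_zero_iff_right (hε.1 c a)).mp factored)

theorem TransposedLeibniz.two_smul_mul_br (hLeib : TransposedLeibniz 𝒜 ε μ br α)
    (hε : IsCommFactor ε) (hμ : GradedMul 𝒜 μ) (hα : GradedEnd 𝒜 α) (hLie : IsHomLie 𝒜 ε br α)
    (hh : h ∈ 𝒜 d) (hx : x ∈ 𝒜 a) (hy : y ∈ 𝒜 b) :
    (2 : K) • μ (α h) (br x y) = br (μ h x) (α y) - ε a b • br (μ h y) (α x) := by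
  rw [hLeib hx hy hh, hLie.1 (hα hx) (hμ hh hy), smul_neg, smul_smul, hε.mul_map_add_right,
    sub_eq_add_neg]

theorem two_smul_colorCyclicSum_br_mul_br_eq (hε : IsCommFactor ε) (hμ : GradedMul 𝒜 μ)
    (hbr : GradedMul 𝒜 br) (hα : GradedEnd 𝒜 α) (hLie : IsHomLie 𝒜 ε br α)
    (hLeib : TransposedLeibniz 𝒜 ε μ br α)
    (hh : h ∈ 𝒜 d) (hx : x ∈ 𝒜 a) (hy : y ∈ 𝒜 b) (hz : z ∈ 𝒜 c) :
    (2 : K) • colorCyclicSum ε a b c (fun x y z ↦ br (μ (α h) (br x y)) (α (α z))) x y z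
      = colorCyclicSum ε a b c (fun x y z ↦ br (α (μ h x)) (br (α y) (α z))) x y z := by
  have leibniz : ∀ ⦃a b : Γ⦄ ⦃x y : A⦄ (w : A), x ∈ 𝒜 a → y ∈ 𝒜 b →
      (2 : K) • br (μ (α h) (br x y)) w
        = br (br (μ h x) (α y)) w - ε a b • br (br (μ h y) (α x)) w := by
    intro a b x y w hx hy
    rw [← LinearMap.smul_apply, ← map_smul, hLeib.two_smul_mul_br hε hμ hα hLie hh hx hy,
      map_sub, map_smul, LinearMap.sub_apply, LinearMap.smul_apply]
  simp only [colorCyclicSum, smul_add, smul_comm (2 : K)]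
  rw [leibniz _ hx hy, leibniz _ hy hz, leibniz _ hz hx,
    hLie.br_apply_br hε hbr hα (hμ hh hx) (hα hy) (hα hz),
    hLie.br_apply_br hε hbr hα (hμ hh hy) (hα hz) (hα hx),
    hLie.br_apply_br hε hbr hα (hμ hh hz) (hα hx) (hα hy)]
  module

theorem colorCyclicSum_br_mul_br_eq (hε : IsCommFactor ε) (hμ : GradedMul 𝒜 μ)
    (hbr : GradedMul 𝒜 br) (hα : GradedEnd 𝒜 α) (hLie : IsHomLie 𝒜 ε br α)
    (hLeib : TransposedLeibniz 𝒜 ε μ br α)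
    (hmulα : ∀ x y : A, α (μ x y) = μ (α x) (α y))
    (hbrα : ∀ x y : A, α (br x y) = br (α x) (α y))
    (hh : h ∈ 𝒜 d) (hx : x ∈ 𝒜 a) (hy : y ∈ 𝒜 b) (hz : z ∈ 𝒜 c) :
    colorCyclicSum ε a b c (fun x y z ↦ br (μ (α h) (br x y)) (α (α z))) x y z
      = colorCyclicSum ε a b c (fun x y z ↦ br (α (μ h x)) (br (α y) (α z))) x y z := by
  have leibniz : ∀ ⦃a b c : Γ⦄ ⦃x y z : A⦄, x ∈ 𝒜 a → y ∈ 𝒜 b → z ∈ 𝒜 c →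
      ε c a • (2 : K) • μ (α (α h)) (br (br x y) (α z))
        = ε c a • br (μ (α h) (br x y)) (α (α z))
          - ε b c • br (α (μ h z)) (br (α x) (α y)) := by
    intro a b c x y z hx hy hz
    rw [hLeib.two_smul_mul_br hε hμ hα hLie (hα hh) (hbr hx hy) (hα hz), smul_sub, smul_smul,
      hε.mul_map_add_left, hmulα, hbrα]
  have jacobi := congrArg (fun v ↦ (2 : K) • μ (α (α h)) v)
    (hLie.colorCyclicSum_br_br_left hε hbr hα hx hy hz)
  simp only [colorCyclicSum, map_add, map_smul, map_zero, smul_add, smul_zero,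
    smul_comm (2 : K)] at jacobi
  rw [leibniz hx hy hz, leibniz hy hz hx, leibniz hz hx hy] at jacobi
  simp only [colorCyclicSum]
  linear_combination (norm := module) jacobi

end TransposedHomPoisson

theorem transposedHomPoisson_cyclic_bracket_h_general
    {K Γ A : Type*} [Field K] [AddCommGroup Γ] [AddCommGroup A] [Module K A]
    (𝒜 : Γ → Submodule K A) (ε : Γ → Γ → K)
    (μ br : A →ₗ[K] A →ₗ[K] A) (α : A →ₗ[K] A)
    (hε : IsCommFactor ε) (hμ : GradedMul 𝒜 μ) (hbr : GradedMul 𝒜 br)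
    (hα : GradedEnd 𝒜 α)
    (hLie : IsHomLie 𝒜 ε br α) (hLeib : TransposedLeibniz 𝒜 ε μ br α)
    (hmulα : ∀ x y : A, α (μ x y) = μ (α x) (α y))
    (hbrα : ∀ x y : A, α (br x y) = br (α x) (α y)) :
    ∀ ⦃γ₀ γ₁ γ₂ γ₃ : Γ⦄ ⦃h x y z : A⦄,
      h ∈ 𝒜 γ₀ → x ∈ 𝒜 γ₁ → y ∈ 𝒜 γ₂ → z ∈ 𝒜 γ₃ →
      ε γ₃ γ₁ • br (μ (α h) (br x y)) (α (α z))
        + ε γ₁ γ₂ • br (μ (α h) (br y z)) (α (α x))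
        + ε γ₂ γ₃ • br (μ (α h) (br z x)) (α (α y)) = 0 := by
  intro γ₀ γ₁ γ₂ γ₃ h x y z hh hx hy hz
  have two_smul_eq := two_smul_colorCyclicSum_br_mul_br_eq hε hμ hbr hα hLie hLeib hh hx hy hz
  rw [← colorCyclicSum_br_mul_br_eq hε hμ hbr hα hLie hLeib hmulα hbrα hh hx hy hz, two_smul,
    add_eq_left] at two_smul_eq
  exact two_smul_eq

/-- in a multiplicative transposed Hom-Poisson color Hom-algebra the
cyclic sum of `ε(z,x)[α(h)·[x,y], α²(z)]` vanishes. -/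
theorem transposedHomPoisson_cyclic_bracket_h
    {K Γ A : Type*} [Field K] [AddCommGroup Γ] [AddCommGroup A] [Module K A]
    (𝒜 : Γ → Submodule K A) (ε : Γ → Γ → K)
    (μ br : A →ₗ[K] A →ₗ[K] A) (α : A →ₗ[K] A)
    (hε : IsCommFactor ε) (hμ : GradedMul 𝒜 μ) (hbr : GradedMul 𝒜 br)
    (hα : GradedEnd 𝒜 α)
    (hcomm : IsEpsComm 𝒜 ε μ) (hassoc : IsHomAssoc 𝒜 μ α)
    (hLie : IsHomLie 𝒜 ε br α) (hLeib : TransposedLeibniz 𝒜 ε μ br α)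
    (hmulα : ∀ x y : A, α (μ x y) = μ (α x) (α y))
    (hbrα : ∀ x y : A, α (br x y) = br (α x) (α y)) :
    ∀ ⦃γ₀ γ₁ γ₂ γ₃ : Γ⦄ ⦃h x y z : A⦄,
      h ∈ 𝒜 γ₀ → x ∈ 𝒜 γ₁ → y ∈ 𝒜 γ₂ → z ∈ 𝒜 γ₃ →
      ε γ₃ γ₁ • br (μ (α h) (br x y)) (α (α z))
        + ε γ₁ γ₂ • br (μ (α h) (br y z)) (α (α x))
        + ε γ₂ γ₃ • br (μ (α h) (br z x)) (α (α y)) = 0 := by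
  exact transposedHomPoisson_cyclic_bracket_h_general 𝒜 ε μ br α hε hμ hbr hα hLie hLeib
    hmulα hbrα
end
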